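/- For every positive integer n, the Pfaffian of the 2n×2n skew-symmetric matrix whose (i,j) entry is (j−i)·D_{i+j−3} for 1 ≤ i,j ≤ 2n (with the convention that the (1,1) entry, whose factor j−i vanishes, is 0) equals 2^{(n+1)(n−1)}·(2n−1)·∏_{k=1}^{n−1} (4k−1). -/

import Mathlib

/-- The Pfaffian of a `2N × 2N` matrix, defined as the sum over all partitions of
the index set into two-element blocks (encoded as permutations `σ` with
`σ(2i) < σ(2i+1)` and `σ(0) < σ(2) < … < σ(2N-2)`, one for each partition) of the
sign of `σ` times the product `∏ i, A (σ (2i)) (σ (2i+1))`. -/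
def pfaffian {R : Type*} [CommRing R] {N : ℕ}
    (A : Matrix (Fin (2 * N)) (Fin (2 * N)) R) : R :=
  ∑ σ ∈ Finset.univ.filter (fun σ : Equiv.Perm (Fin (2 * N)) =>
      (∀ i : Fin N, σ ⟨2 * i.val, by have := i.isLt; omega⟩
          < σ ⟨2 * i.val + 1, by have := i.isLt; omega⟩) ∧
      (∀ i j : Fin N, i < j → σ ⟨2 * i.val, by have := i.isLt; omega⟩
          < σ ⟨2 * j.val, by have := j.isLt; omega⟩)),
    (Equiv.Perm.sign σ : ℤ) •
      ∏ i : Fin N, A (σ ⟨2 * i.val, by have := i.isLt; omega⟩)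
        (σ ⟨2 * i.val + 1, by have := i.isLt; omega⟩)

/-- The `n`-th central Delannoy number `D_n = ∑_{k=0}^{n} C(n,k)·C(n+k,k)`. -/
def delannoy (n : ℕ) : ℚ :=
  ∑ k ∈ Finset.range (n + 1), (n.choose k : ℚ) * ((n + k).choose k)

def pE (N : ℕ) : Fin N × Fin 2 ≃ Fin (2 * N) :=
  finProdFinEquiv.trans (finCongr (Nat.mul_comm N 2))

lemma pE_val (N : ℕ) (i : Fin N) (b : Fin 2) : (pE N (i, b)).val = b.val + 2 * i.val := by
  simp [pE, finProdFinEquiv]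

def pTerm {R : Type*} [CommRing R] {N : ℕ} (A : Matrix (Fin (2 * N)) (Fin (2 * N)) R)
    (σ : Equiv.Perm (Fin (2 * N))) : R :=
  (Equiv.Perm.sign σ : ℤ) • ∏ i : Fin N, A (σ (pE N (i, 0))) (σ (pE N (i, 1)))

def pCan {N : ℕ} (σ : Equiv.Perm (Fin (2 * N))) : Prop :=
  (∀ i : Fin N, σ (pE N (i, 0)) < σ (pE N (i, 1))) ∧
  (∀ i j : Fin N, i < j → σ (pE N (i, 0)) < σ (pE N (j, 0)))

lemma pE0 (N : ℕ) (i : Fin N) (h : 2 * i.val < 2 * N) : (⟨2 * i.val, h⟩ : Fin (2*N)) = pE N (i, 0) := by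
  ext; simp [pE_val]
lemma pE1 (N : ℕ) (i : Fin N) (h : 2 * i.val + 1 < 2 * N) :
    (⟨2 * i.val + 1, h⟩ : Fin (2*N)) = pE N (i, 1) := by
  ext; simp [pE_val]; omega

open Classical in
lemma pfaffian_eq {R : Type*} [CommRing R] {N : ℕ} (A : Matrix (Fin (2 * N)) (Fin (2 * N)) R) :
    pfaffian A = ∑ σ ∈ Finset.univ.filter (fun σ : Equiv.Perm (Fin (2 * N)) => pCan σ), pTerm A σ := by
  unfold pfaffian pTerm pCan
  simp only [pE0, pE1]
  congr!

def pG {N : ℕ} (π : Equiv.Perm (Fin N)) (ε : Fin N → Equiv.Perm (Fin 2)) : Equiv.Perm (Fin N × Fin 2) :=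
  (Equiv.prodCongrRight ε).trans (Equiv.prodCongrLeft fun _ => π)

lemma pG_apply {N : ℕ} (π : Equiv.Perm (Fin N)) (ε : Fin N → Equiv.Perm (Fin 2)) (i : Fin N) (b : Fin 2) :
    pG π ε (i, b) = (π i, ε i b) := rfl

lemma pG_sign {N : ℕ} (π : Equiv.Perm (Fin N)) (ε : Fin N → Equiv.Perm (Fin 2)) :
    Equiv.Perm.sign (pG π ε) = ∏ i, Equiv.Perm.sign (ε i) := by
  unfold pG
  rw [Equiv.Perm.sign_trans, Equiv.Perm.sign_prodCongrRight, Equiv.Perm.sign_prodCongrLeft]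
  simp

def pH {N : ℕ} (π : Equiv.Perm (Fin N)) (ε : Fin N → Equiv.Perm (Fin 2)) : Equiv.Perm (Fin (2 * N)) :=
  (pE N).permCongr (pG π ε)

lemma pH_apply {N : ℕ} (π : Equiv.Perm (Fin N)) (ε : Fin N → Equiv.Perm (Fin 2)) (i : Fin N) (b : Fin 2) :
    pH π ε (pE N (i, b)) = pE N (π i, ε i b) := by
  simp [pH, Equiv.permCongr_apply, pG_apply]

lemma perm2 (e : Equiv.Perm (Fin 2)) : e = 1 ∨ e = Equiv.swap 0 1 := by
  revert e; decide

lemma pTerm_mul {R : Type*} [CommRing R] {N : ℕ} (A : Matrix (Fin (2 * N)) (Fin (2 * N)) R)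
    (hA : ∀ i j, A i j = - A j i) (σ : Equiv.Perm (Fin (2 * N)))
    (π : Equiv.Perm (Fin N)) (ε : Fin N → Equiv.Perm (Fin 2)) :
    pTerm A (σ * pH π ε) = pTerm A σ := by
  unfold pTerm
  have h1 : Equiv.Perm.sign (pH π ε) = ∏ i, Equiv.Perm.sign (ε i) := by
    rw [pH, Equiv.Perm.sign_permCongr, pG_sign]
  have h2 : ∀ i, A ((σ * pH π ε) (pE N (i, 0))) ((σ * pH π ε) (pE N (i, 1))) =
      (((Equiv.Perm.sign (ε i) : ℤˣ) : ℤ) : R) * A (σ (pE N (π i, 0))) (σ (pE N (π i, 1))) := by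
    intro i
    simp only [Equiv.Perm.mul_apply, pH_apply]
    rcases perm2 (ε i) with h | h
    · simp [h]
    · rw [h]
      rw [Equiv.Perm.sign_swap (by decide)]
      simp
      exact hA _ _
  simp only [h2]
  rw [Finset.prod_mul_distrib, Equiv.prod_comp π (fun i => A (σ (pE N (i, 0))) (σ (pE N (i, 1))))]
  rw [Equiv.Perm.sign_mul, h1]
  simp only [zsmul_eq_mul]
  push_cast
  have h3 : (∏ i, (((Equiv.Perm.sign (ε i) : ℤˣ) : ℤ) : R)) * (∏ i, (((Equiv.Perm.sign (ε i) : ℤˣ) : ℤ) : R)) = 1 := by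
    rw [← Finset.prod_mul_distrib]
    apply Finset.prod_eq_one
    intro i _
    rcases Int.units_eq_one_or (Equiv.Perm.sign (ε i)) with h | h <;> simp [h]
  linear_combination (((Equiv.Perm.sign σ : ℤˣ) : ℤ) : R) * (∏ i, A (σ (pE N (i, 0))) (σ (pE N (i, 1)))) * h3

lemma pH_exists {N : ℕ} (σ : Equiv.Perm (Fin (2 * N))) :
    ∃ π ε, pCan (σ * pH π ε) := by
  have h0 : ∀ i, ∃ e : Equiv.Perm (Fin 2), σ (pE N (i, e 0)) < σ (pE N (i, e 1)) := by
    intro i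
    rcases lt_trichotomy (σ (pE N (i, 0))) (σ (pE N (i, 1))) with h | h | h
    · exact ⟨1, h⟩
    · simp at h
    · exact ⟨Equiv.swap 0 1, by simpa using h⟩
  choose e he using h0
  let f : Fin N → Fin (2 * N) := fun i => σ (pE N (i, e i 0))
  have hf : Function.Injective f := by
    intro i j h
    simp [f] at h
    exact h.1
  refine ⟨Tuple.sort f, fun i => e (Tuple.sort f i), ?_, ?_⟩
  · intro i
    simp only [Equiv.Perm.mul_apply, pH_apply]
    exact he _
  · intro i j hij
    simp only [Equiv.Perm.mul_apply, pH_apply]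
    have := (Tuple.monotone_sort f).strictMono_of_injective (hf.comp (Tuple.sort f).injective)
    exact this hij

lemma pH_mul {N : ℕ} (π π' : Equiv.Perm (Fin N)) (ε ε' : Fin N → Equiv.Perm (Fin 2)) :
    pH π ε * pH π' ε' = pH (π * π') (fun i => ε (π' i) * ε' i) := by
  ext x
  obtain ⟨⟨i, b⟩, rfl⟩ := (pE N).surjective x
  simp [pH_apply]

lemma pH_inv {N : ℕ} (π : Equiv.Perm (Fin N)) (ε : Fin N → Equiv.Perm (Fin 2)) :
    (pH π ε)⁻¹ = pH π⁻¹ (fun i => (ε (π⁻¹ i))⁻¹) := by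
  rw [inv_eq_iff_mul_eq_one, pH_mul]
  ext x
  obtain ⟨⟨i, b⟩, rfl⟩ := (pE N).surjective x
  simp [pH_apply]

lemma pH_unique {N : ℕ} (σ : Equiv.Perm (Fin (2 * N))) (π : Equiv.Perm (Fin N))
    (ε : Fin N → Equiv.Perm (Fin 2)) (h : pCan σ) (h' : pCan (σ * pH π ε)) :
    π = 1 ∧ ε = 1 := by
  have hε : ε = 1 := by
    ext1 i
    rcases perm2 (ε i) with hh | hh
    · exact hh
    · exfalso
      have h1 := h'.1 i
      simp only [Equiv.Perm.mul_apply, pH_apply, hh, Equiv.swap_apply_left, Equiv.swap_apply_right] at h1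
      exact lt_asymm h1 (h.1 (π i))
  subst hε
  refine ⟨?_, rfl⟩
  have hm : StrictMono (fun i => σ (pE N (i, 0))) := fun i j hij => h.2 i j hij
  have hp : StrictMono π := by
    intro i j hij
    have := h'.2 i j hij
    simp only [Equiv.Perm.mul_apply, pH_apply] at this
    exact hm.lt_iff_lt.1 this
  ext1 i
  have : (hp.orderIsoOfSurjective π π.surjective) = OrderIso.refl _ := Subsingleton.elim _ _
  have := congrArg (fun (o : Fin N ≃o Fin N) => o i) this
  simpa using this

def pFull {R : Type*} [CommRing R] {N : ℕ} (A : Matrix (Fin (2 * N)) (Fin (2 * N)) R) : R :=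
  ∑ σ : Equiv.Perm (Fin (2 * N)), pTerm A σ

lemma pFull_eq {R : Type*} [CommRing R] {N : ℕ} (A : Matrix (Fin (2 * N)) (Fin (2 * N)) R)
    (hA : ∀ i j, A i j = - A j i) :
    pFull A = (Fintype.card (Equiv.Perm (Fin N) × (Fin N → Equiv.Perm (Fin 2))) : R) * pfaffian A := by
  classical
  rw [pfaffian_eq, Finset.mul_sum]
  have : ∀ σ : Equiv.Perm (Fin (2 * N)), (Fintype.card (Equiv.Perm (Fin N) × (Fin N → Equiv.Perm (Fin 2))) : R) * pTerm A σ =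
    ∑ g : Equiv.Perm (Fin N) × (Fin N → Equiv.Perm (Fin 2)), pTerm A (σ * pH g.1 g.2) := by
    intro σ
    simp only [pTerm_mul A hA]
    rw [Finset.sum_const, nsmul_eq_mul]; rfl
  simp only [this]
  rw [← Finset.sum_product', pFull]
  symm
  refine Finset.sum_bij (fun p _ => p.1 * pH p.2.1 p.2.2) (fun _ _ => Finset.mem_univ _) ?_ ?_ (fun _ _ => rfl)
  · rintro ⟨σ, π, ε⟩ h ⟨σ', π', ε'⟩ h' heq
    simp at h h' heq
    have e1 : σ' = σ * (pH π ε * (pH π' ε')⁻¹) := by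
      rw [← mul_assoc, heq]; simp
    have e2 := e1
    rw [pH_inv, pH_mul] at e1
    have hu := pH_unique σ _ _ h (e1 ▸ h')
    have hp : π = π' := by
      have := hu.1
      rwa [mul_inv_eq_one] at this
    subst hp
    have he : ε = ε' := by
      ext1 i
      have := congrFun hu.2 (π i)
      simp at this
      rwa [mul_inv_eq_one] at this
    subst he
    simp at e2
    simp [e2]
  · intro σ _
    obtain ⟨π, ε, h⟩ := pH_exists σ
    refine ⟨(σ * pH π ε, π⁻¹, (fun i => (ε (π⁻¹ i))⁻¹)), by simpa using h, ?_⟩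
    simp only []
    rw [← pH_inv]; simp

lemma pFull_conj {R : Type*} [CommRing R] {N : ℕ} (A B : Matrix (Fin (2 * N)) (Fin (2 * N)) R) :
    pFull (B * A * B.transpose) = B.det * pFull A := by
  classical
  have key : ∀ σ : Equiv.Perm (Fin (2 * N)), pTerm (B * A * B.transpose) σ =
     ∑ f : Fin (2 * N) → Fin (2 * N), (∏ i : Fin N, A (f (pE N (i, 0))) (f (pE N (i, 1)))) *
       (((Equiv.Perm.sign σ : ℤˣ) : ℤ) * ∏ x, B (σ x) (f x)) := by
    intro σ
    have : ∀ u v, (B * A * B.transpose) u v =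
        ∑ p : Fin 2 → Fin (2 * N), A (p 0) (p 1) * ∏ b : Fin 2, B (![u, v] b) (p b) := by
      intro u v
      rw [← (finTwoArrowEquiv (Fin (2 * N))).symm.sum_comp, Fintype.sum_prod_type]
      simp only [Matrix.mul_apply, Matrix.transpose_apply, Finset.sum_mul, Fin.prod_univ_two]
      rw [Finset.sum_comm]
      refine Finset.sum_congr rfl fun _ _ => Finset.sum_congr rfl fun _ _ => ?_
      simp [finTwoArrowEquiv]; ring
    unfold pTerm
    simp only [this]
    rw [Finset.prod_univ_sum]
    rw [zsmul_eq_mul, Finset.mul_sum, Fintype.piFinset_univ]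
    let E : (Fin N → Fin 2 → Fin (2 * N)) ≃ (Fin (2 * N) → Fin (2 * N)) :=
      (Equiv.curry (Fin N) (Fin 2) (Fin (2 * N))).symm.trans ((pE N).arrowCongr (Equiv.refl _))
    have hE : ∀ p i b, E p (pE N (i, b)) = p i b := by
      intro p i b; simp [E, Equiv.arrowCongr]
    rw [← E.sum_comp]
    refine Finset.sum_congr rfl fun p _ => ?_
    simp only [hE]
    rw [← (pE N).prod_comp, Fintype.prod_prod_type]
    simp only [hE, Finset.prod_mul_distrib, Fin.prod_univ_two]
    simp; ring
  unfold pFull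
  simp only [key]
  rw [Finset.sum_comm]
  simp only [← Finset.mul_sum]
  have hdet : ∀ f : Fin (2 * N) → Fin (2 * N),
      ∑ σ : Equiv.Perm (Fin (2 * N)), ((((Equiv.Perm.sign σ : ℤˣ) : ℤ) : R) * ∏ x, B (σ x) (f x)) =
      (B.submatrix id f).det := by
    intro f; rw [Matrix.det_apply']; rfl
  simp only [hdet]
  rw [Finset.mul_sum]
  symm
  rw [← Finset.sum_subset (Finset.subset_univ (Finset.univ.image (fun σ : Equiv.Perm (Fin (2 * N)) => (σ : Fin (2 * N) → Fin (2 * N)))))]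
  · rw [Finset.sum_image (by intro a _ b _ h; exact DFunLike.coe_injective h)]
    refine Finset.sum_congr rfl fun σ _ => ?_
    rw [Matrix.det_permute', pTerm, zsmul_eq_mul]
    ring
  · intro f _ hf
    have : ¬ Function.Injective f := by
      intro hi
      apply hf
      simp only [Finset.mem_image, Finset.mem_univ, true_and]
      exact ⟨Equiv.ofBijective f (Finite.injective_iff_bijective.1 hi), rfl⟩
    simp only [Function.Injective, not_forall] at this
    obtain ⟨a, b, hab, hne⟩ := this
    rw [Matrix.det_zero_of_column_eq hne (by intro k; simp [hab]), mul_zero]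

lemma pfaffian_conj {N : ℕ} (A B : Matrix (Fin (2 * N)) (Fin (2 * N)) ℚ)
    (hA : ∀ i j, A i j = - A j i) (hB : B.det = 1) :
    pfaffian (B * A * B.transpose) = pfaffian A := by
  have h := pFull_conj A B
  rw [hB, one_mul, pFull_eq A hA, pFull_eq] at h
  · exact mul_left_cancel₀ (by exact_mod_cast Fintype.card_ne_zero) h
  · have hA' : A.transpose = -A := by ext i j; simp [hA j i]
    have : (B * A * B.transpose).transpose = - (B * A * B.transpose) := by
      rw [Matrix.transpose_mul, Matrix.transpose_mul, hA']; simp [Matrix.mul_assoc]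
    intro i j
    have := congrFun (congrFun this j) i
    simpa using this

lemma pfaffian_tri {N : ℕ} (A : Matrix (Fin (2 * N)) (Fin (2 * N)) ℚ)
    (hA : ∀ (i : Fin N) (j : Fin (2 * N)), 2 * i.val + 1 < j.val → A (pE N (i, 0)) j = 0) :
    pfaffian A = ∏ i : Fin N, A (pE N (i, 0)) (pE N (i, 1)) := by
  classical
  rw [pfaffian_eq, Finset.sum_eq_single 1]
  · simp [pTerm]
  · intro σ hσ hne
    rw [Finset.mem_filter] at hσ
    have hc := hσ.2
    by_contra h0
    apply hne
    have hnz : ∀ i, A (σ (pE N (i, 0))) (σ (pE N (i, 1))) ≠ 0 := by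
      intro i hi
      apply h0
      unfold pTerm
      rw [Finset.prod_eq_zero (Finset.mem_univ i) hi, smul_zero]
    have main : ∀ m : ℕ, ∀ i : Fin N, i.val = m → ∀ b, σ (pE N (i, b)) = pE N (i, b) := by
      intro m
      induction m using Nat.strong_induction_on with
      | _ m ih =>
        intro i him
        have hlt : ∀ x : Fin (2 * N), x.val < 2 * i.val → σ x = x := by
          intro x hx
          obtain ⟨⟨k, b⟩, rfl⟩ := (pE N).surjective x
          rw [pE_val] at hx
          exact ih k.val (by omega) k rfl b
        have hge : ∀ x : Fin (2 * N), 2 * i.val ≤ x.val → 2 * i.val ≤ (σ x).val := by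
          intro x hx
          by_contra hcon
          have := σ.injective (hlt (σ x) (by omega))
          rw [this] at hcon
          omega
        have h2i : σ (pE N (i, 0)) = pE N (i, 0) := by
          obtain ⟨x, hx⟩ := σ.surjective (pE N (i, 0))
          obtain ⟨⟨j, b⟩, rfl⟩ := (pE N).surjective x
          have hx' := congrArg Fin.val hx
          rw [pE_val] at hx'
          simp at hx'
          have hji : i.val ≤ j.val := by
            by_contra hcon
            rw [hlt _ (by rw [pE_val]; omega), pE_val] at hx'
            omega
          have hj0 := hge (pE N (j, 0)) (by rw [pE_val]; omega)
          have hb : b = 0 := by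
            fin_cases b
            · rfl
            · exfalso
              have := hc.1 j
              rw [Fin.lt_def] at this
              simp at hx'
              omega
          subst hb
          rcases hji.lt_or_eq with hl | he
          · have h5 := hc.2 i j hl
            rw [Fin.lt_def] at h5
            have := hge (pE N (i, 0)) (by rw [pE_val]; omega)
            omega
          · have : i = j := Fin.ext he
            rw [← this] at hx; exact hx
        have h2i1 : σ (pE N (i, 1)) = pE N (i, 1) := by
          have h5 := hc.1 i
          have h6 := hnz i
          rw [h2i] at h5 h6
          rw [Fin.lt_def, pE_val] at h5
          have h7 : ¬ (2 * i.val + 1 < (σ (pE N (i, 1))).val) := fun h => h6 (hA i _ h)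
          ext
          rw [pE_val]
          simp at h5 ⊢
          omega
        intro b
        fin_cases b
        · exact h2i
        · exact h2i1
    ext1 x
    obtain ⟨⟨k, b⟩, rfl⟩ := (pE N).surjective x
    exact main k.val k rfl b
  · intro h
    exfalso; apply h
    simp only [Finset.mem_filter, Finset.mem_univ, true_and]
    constructor
    · intro i
      rw [Fin.lt_def]
      simp only [Equiv.Perm.one_apply, pE_val]
      simp
    · intro i j h
      rw [Fin.lt_def] at h ⊢
      simp only [Equiv.Perm.one_apply, pE_val]
      omega

open Polynomial in
noncomputable def dC : ℕ → ℚ[X]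
  | 0 => 2
  | 1 => X - 3
  | (n+2) => (X - 3) * dC (n+1) - 2 * dC n

open Polynomial in
noncomputable def dV : ℕ → ℚ[X]
  | 0 => 0
  | 1 => 1
  | (n+2) => (X - 3) * dV (n+1) - 2 * dV n

lemma dC_eq_dV (n : ℕ) : dC (n+1) = dV (n+2) - 2 * dV n := by
  induction n using Nat.twoStepInduction with
  | zero => simp [dC, dV]
  | one => simp [dC, dV]; ring
  | more n h1 h2 =>
    rw [dC, h1, h2, dV.eq_3 (n+2), dV.eq_3 (n+1), dV.eq_3 n]
    ring

open Polynomial in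
lemma dC_deriv (n : ℕ) : derivative (dC n) = (n : ℚ[X]) * dV n := by
  induction n using Nat.twoStepInduction with
  | zero => simp [dC, dV]
  | one => simp [dC, dV]
  | more n h1 h2 =>
    rw [dC]
    have h3 : derivative (3 : ℚ[X]) = 0 := derivative_ofNat 3
    have h4 : derivative (2 : ℚ[X]) = 0 := derivative_ofNat 2
    simp only [derivative_sub, derivative_mul, h1, h2, derivative_X, h3, h4]
    have := dC_eq_dV n
    have h := dV.eq_3 n
    rw [this]
    push_cast
    rw [h]; ring

open LaurentPolynomial in
noncomputable def lx : LaurentPolynomial ℚ := 3 + T 1 + 2 * T (-1)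

noncomputable def lct : LaurentPolynomial ℚ →ₗ[ℚ] ℚ :=
  (Finsupp.lapply (0 : ℤ) ∘ₗ (AddMonoidAlgebra.coeffLinearEquiv ℚ).toLinearMap)

noncomputable def dL : Polynomial ℚ →ₗ[ℚ] ℚ :=
  lct ∘ₗ (Polynomial.aeval lx).toLinearMap


lemma lct_T (n : ℤ) : lct (LaurentPolynomial.T n) = if n = 0 then 1 else 0 := by
  simp [lct]

lemma lct_CT (r : ℚ) (f : LaurentPolynomial ℚ) : lct (LaurentPolynomial.C r * f) = r * lct f := by
  rw [← LaurentPolynomial.smul_eq_C_mul, map_smul, smul_eq_mul]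

open LaurentPolynomial in
lemma aeval_dC (n : ℕ) : Polynomial.aeval lx (dC n) = T (n : ℤ) + C (2 ^ n : ℚ) * T (-(n : ℤ)) := by
  have h2 : (C (2 : ℚ) : LaurentPolynomial ℚ) = 2 := map_ofNat C 2
  have h3 : (Polynomial.aeval lx) (3 : Polynomial ℚ) = 3 := map_ofNat _ 3
  have h4 : (Polynomial.aeval lx) (2 : Polynomial ℚ) = 2 := map_ofNat _ 2
  have hx : (Polynomial.aeval lx) (Polynomial.X - 3 : Polynomial ℚ) = T 1 + 2 * T (-1) := by
    rw [map_sub, h3, Polynomial.aeval_X, lx]; ring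
  induction n using Nat.twoStepInduction with
  | zero => simp [dC, h4]; norm_num
  | one => simp only [dC, hx]; simp [h2]
  | more n h1 h2' =>
    rw [dC, map_sub, map_mul, map_mul, hx, h4, h1, h2']
    simp only [map_pow, h2]
    push_cast
    have a1 : (T ((n:ℤ) + 1) : LaurentPolynomial ℚ) = T n * T 1 := T_add _ _
    have a2 : (T (-((n:ℤ) + 1)) : LaurentPolynomial ℚ) = T (-n) * T (-1) := by rw [← T_add]; congr 1; ring
    have a3 : (T ((n:ℤ) + 2) : LaurentPolynomial ℚ) = T n * T 1 * T 1 := by rw [← T_add, ← T_add]; congr 1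
    have a4 : (T (-((n:ℤ) + 2)) : LaurentPolynomial ℚ) = T (-n) * T (-1) * T (-1) := by rw [← T_add, ← T_add]; congr 1; ring
    have a5 : (T 1 * T (-1) : LaurentPolynomial ℚ) = 1 := by rw [← T_add]; simp
    rw [a1, a2, a3, a4]
    linear_combination (2 * T n + 2 ^ (n+1) * T (-n)) * a5

open LaurentPolynomial in
lemma dL_X (n : ℕ) : dL (Polynomial.X ^ n) = delannoy n := by
  have h0 : (lx : LaurentPolynomial ℚ) = (1 + T 1) * ((1 + T 1) + 1) * T (-1) := by
    have a5 : (T 1 * T (-1) : LaurentPolynomial ℚ) = 1 := by rw [← T_add]; simp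
    rw [lx]
    linear_combination (-(T 1) - 3 : LaurentPolynomial ℚ) * a5
  have h1 : dL (Polynomial.X ^ n) = lct (lx ^ n) := by
    simp [dL]
  have hk : ∀ m : ℕ, lct ((1 + T 1) ^ m * T (-(n:ℤ))) = (m.choose n : ℚ) := by
    intro m
    rw [add_comm, add_pow, Finset.sum_mul, map_sum]
    have : ∀ k ∈ Finset.range (m+1), lct (T 1 ^ k * 1 ^ (m - k) * ((m.choose k : ℕ) : LaurentPolynomial ℚ) * T (-(n:ℤ)))
       = if k = n then (m.choose k : ℚ) else 0 := by
      intro k _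
      rw [show (T 1 ^ k * 1 ^ (m - k) * ((m.choose k : ℕ) : LaurentPolynomial ℚ) * T (-(n:ℤ))) = (m.choose k : ℚ) • T ((k : ℤ) - n) by
        rw [smul_eq_C_mul, T_sub, T_pow, map_natCast, one_pow, mul_one, mul_one]; ring]
      rw [map_smul, lct_T]
      by_cases h : k = n
      · simp [h]
      · have h' : ¬ ((k : ℤ) - n = 0) := by omega
        rw [if_neg h', if_neg h, smul_zero]
    rw [Finset.sum_congr rfl this, Finset.sum_ite_eq']
    split_ifs with h
    · rfl
    · simp at h
      rw [Nat.choose_eq_zero_of_lt (by omega)]; simp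
  rw [h1, h0, mul_pow, mul_pow, T_pow, add_pow (1 + T 1), Finset.mul_sum, Finset.sum_mul, map_sum, delannoy]
  refine Finset.sum_congr rfl fun k _ => ?_
  rw [show ((1 + T 1) ^ n * ((1 + T 1) ^ k * 1 ^ (n - k) * ((n.choose k : ℕ) : LaurentPolynomial ℚ)) * T ((n : ℤ) * (-1)))
    = (n.choose k : ℚ) • ((1 + T 1) ^ (n + k) * T (-(n : ℤ))) by
    rw [smul_eq_C_mul, map_natCast, one_pow, mul_one, mul_neg_one, pow_add]; ring]
  rw [map_smul, hk, smul_eq_mul, Nat.choose_symm_add]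

lemma dL_CC (m n : ℕ) : dL (dC m * dC n) = if m = n then (if m = 0 then (4 : ℚ) else 2 ^ (n + 1)) else 0 := by
  have : dL (dC m * dC n) = lct (Polynomial.aeval lx (dC m) * Polynomial.aeval lx (dC n)) := by
    simp [dL]
  rw [this, aeval_dC, aeval_dC]
  open LaurentPolynomial in
  rw [show ((T (m:ℤ) + C (2 ^ m : ℚ) * T (-(m:ℤ))) * (T (n:ℤ) + C (2 ^ n : ℚ) * T (-(n:ℤ))) : LaurentPolynomial ℚ)
    = T ((m:ℤ) + n) + (2 ^ m : ℚ) • T (-(m:ℤ) + n) + (2 ^ n : ℚ) • T ((m:ℤ) + -n) + (2 ^ (m + n) : ℚ) • T (-(m:ℤ) + -n) by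
      simp only [smul_eq_C_mul, T_add, pow_add, map_mul]; ring]
  simp only [map_add, map_smul, lct_T, smul_eq_mul]
  by_cases h : m = n
  · subst h
    by_cases h0 : m = 0
    · subst h0; norm_num
    · have h1 : ¬ ((m : ℤ) + m = 0) := by omega
      have h2 : ¬ (-(m : ℤ) + -m = 0) := by omega
      simp [h1, h2, h0]; ring
  · have h1 : ¬ ((m : ℤ) + n = 0) := by omega
    have h2 : ¬ (-(m : ℤ) + -n = 0) := by omega
    have h3 : ¬ (-(m : ℤ) + n = 0) := by omega
    have h4 : ¬ ((m : ℤ) + -n = 0) := by omega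
    simp [h, h1, h2, h3, h4]

lemma dL_one : dL 1 = 1 := by
  have := dL_X 0
  simpa [delannoy] using this

/-- `L(C_m V_n)`. -/
lemma dL_CV (m n : ℕ) : dL (dC m * dV n) = if m < n ∧ (m + n) % 2 = 1 then (2 : ℚ) ^ ((m + n + 1) / 2) else 0 := by
  induction n using Nat.twoStepInduction with
  | zero => simp [dV]
  | one =>
    have h2 : (2 : Polynomial ℚ) = dC 0 := by simp [dC]
    have : dL (dC m * 2) = 2 * dL (dC m * dV 1) := by
      rw [dV, mul_one, mul_two, map_add]; ring
    have h3 := dL_CC m 0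
    rw [← h2, this] at h3
    by_cases h : m = 0
    · subst h; simp at h3 ⊢; linarith
    · simp [h] at h3 ⊢; exact h3
  | more n h1 _ =>
    have hd : dV (n + 2) = dC (n + 1) + dV n + dV n := by rw [dC_eq_dV]; ring
    rw [hd, mul_add, mul_add, map_add, map_add, h1, dL_CC]
    by_cases hm : m = n + 1
    · subst hm
      have e : (n + 1 + (n + 2)) % 2 = 1 := by omega
      have e2 : (n + 1 + (n + 2) + 1) / 2 = n + 2 := by omega
      simp [e, e2]
    · by_cases hc : m < n ∧ (m + n) % 2 = 1
      · have hc' : m < n + 2 ∧ (m + (n + 2)) % 2 = 1 := by omega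
        have e2 : (m + (n + 2) + 1) / 2 = (m + n + 1) / 2 + 1 := by omega
        rw [if_pos hc, if_pos hc', if_neg hm, e2]; ring
      · have hc' : ¬ (m < n + 2 ∧ (m + (n + 2)) % 2 = 1) := by omega
        rw [if_neg hc, if_neg hc', if_neg hm]; ring

open Polynomial in
noncomputable def dW (f g : ℚ[X]) : ℚ := dL (f * derivative g - derivative f * g)

lemma dW_CC (m n : ℕ) (h : m < n) : dW (dC m) (dC n) =
    if (m + n) % 2 = 1 then (n : ℚ) * 2 ^ ((m + n + 1) / 2) else 0 := by
  unfold dW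
  rw [dC_deriv, dC_deriv]
  have : dC m * ((n : Polynomial ℚ) * dV n) - (m : Polynomial ℚ) * dV m * dC n =
     (n : ℚ) • (dC m * dV n) - (m : ℚ) • (dC n * dV m) := by
    simp only [Polynomial.smul_eq_C_mul]; simp; ring
  rw [this, map_sub, map_smul, map_smul, dL_CV, dL_CV]
  have : ¬ n < m := by omega
  simp [h, this]

open Polynomial in
lemma dW_add (f g h : ℚ[X]) (c : ℚ) : dW f (g - c • h) = dW f g - c * dW f h := by
  unfold dW
  rw [← smul_eq_mul c, ← map_smul dL, ← map_sub dL]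
  congr 1
  simp only [derivative_sub, smul_eq_C_mul, derivative_C_mul]; ring

lemma dW_neg (f g : Polynomial ℚ) : dW f g = - dW g f := by
  unfold dW
  rw [← map_neg]; congr 1; ring

open Polynomial in
lemma dC_monic (n : ℕ) : (dC (n + 1)).Monic ∧ (dC (n + 1)).natDegree = n + 1 := by
  have h3 : (X - 3 : ℚ[X]).Monic := monic_X_sub_C (3 : ℚ)
  have h3' : (X - 3 : ℚ[X]).natDegree = 1 := natDegree_X_sub_C (3 : ℚ)
  have key : ∀ (p q : ℚ[X]) (k : ℕ), p.Monic → p.natDegree = k + 1 → q.natDegree ≤ k → 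
      ((X - 3) * p - 2 * q).Monic ∧ ((X - 3) * p - 2 * q).natDegree = k + 2 := by
    intro p q k hp hpd hq
    have hm := h3.mul hp
    have hd : ((X - 3) * p).natDegree = k + 2 := by
      rw [h3.natDegree_mul hp, h3', hpd]; ring
    have hq2 : (2 * q).natDegree ≤ k := by
      have : (2 * q) = C (2 : ℚ) * q := rfl
      rw [this]
      exact (natDegree_C_mul_le _ _).trans hq
    have hlt : (2 * q).degree < ((X - 3) * p).degree := by
      apply degree_lt_degree
      omega
    refine ⟨hm.sub_of_left hlt, ?_⟩
    rw [natDegree_sub_eq_left_of_natDegree_lt (by omega), hd]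
  induction n using Nat.twoStepInduction with
  | zero => exact ⟨h3, h3'⟩
  | one =>
    rw [dC]
    apply key _ _ 0 h3 h3'
    simp [dC]
  | more n h1 h2 =>
    rw [dC]
    exact key _ _ (n + 1) h2.1 h2.2 h1.2.le

/-- The final basis. -/
noncomputable def dP : ℕ → Polynomial ℚ
  | 0 => 1
  | 1 => dC 1
  | (n + 2) => if n % 2 = 0 then dC (n + 2) else
      dC (n + 2) - (2 * ((n : ℚ) + 2) / n) • dC n

lemma dP_monic (n : ℕ) : (dP n).Monic ∧ (dP n).natDegree = n := by
  match n with
  | 0 => simp [dP]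
  | 1 => exact dC_monic 0
  | (n + 2) =>
    rw [dP]
    split_ifs with h
    · exact dC_monic _
    · obtain ⟨k, rfl⟩ : ∃ k, n = k + 1 := ⟨n - 1, by omega⟩
      have h1 := dC_monic k
      have h2 := dC_monic (k + 2)
      have hs : ((2 * (((k + 1 : ℕ) : ℚ) + 2) / ((k + 1 : ℕ) : ℚ)) • dC (k + 1)).natDegree ≤ k + 1 :=
        (Polynomial.natDegree_smul_le _ _).trans h1.2.le
      constructor
      · apply h2.1.sub_of_left
        apply Polynomial.degree_lt_degree
        omega
      · rw [Polynomial.natDegree_sub_eq_left_of_natDegree_lt (by rw [h2.2]; omega)]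
        exact h2.2

lemma dW_half (f : Polynomial ℚ) : dW (dP 0) f = dW (dC 0) f / 2 := by
  unfold dW
  have : dC 0 * Polynomial.derivative f - Polynomial.derivative (dC 0) * f =
     (2 : ℚ) • (dP 0 * Polynomial.derivative f - Polynomial.derivative (dP 0) * f) := by
    have h2 : (Polynomial.C (2 : ℚ)) = 2 := rfl
    simp [dC, dP, Polynomial.smul_eq_C_mul, h2]
  rw [this, map_smul, smul_eq_mul]; ring

lemma dW_C_zero (i j : ℕ) (h : 2 * i + 1 < j) : dW (dC (2 * i)) (dP j) = 0 := by
  obtain ⟨n, rfl⟩ : ∃ n, j = n + 2 := ⟨j - 2, by omega⟩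
  rw [dP]
  split_ifs with hn
  · rw [dW_CC _ _ (by omega)]
    exact if_neg (by omega)
  · rw [dW_add, dW_CC _ _ (by omega), dW_CC _ _ (by omega), if_pos (by omega), if_pos (by omega)]
    have : (2 * i + (n + 2) + 1) / 2 = (2 * i + n + 1) / 2 + 1 := by omega
    rw [this]
    have : (n : ℚ) ≠ 0 := by
      have : n ≠ 0 := by omega
      exact_mod_cast this
    field_simp
    push_cast
    ring

lemma dP_even (i : ℕ) : dP (2 * (i + 1)) = dC (2 * (i + 1)) := by
  rw [show 2 * (i + 1) = 2 * i + 2 by ring, dP, if_pos (by omega)]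

lemma dW_zero (i j : ℕ) (h : 2 * i + 1 < j) : dW (dP (2 * i)) (dP j) = 0 := by
  rcases i with _ | i
  · have := dW_C_zero 0 j h
    simp only [mul_zero] at this ⊢
    rw [dW_half, this]; simp
  · rw [dP_even]; exact dW_C_zero _ _ h

lemma dW_diag0 : dW (dP 0) (dP 1) = 1 := by
  rw [dW_half, dP, dW_CC _ _ (by omega)]; simp

lemma dW_diag (i : ℕ) : dW (dP (2 * (i + 1))) (dP (2 * (i + 1) + 1)) =
    2 ^ (2 * i + 3) * (4 * ((i : ℚ) + 1) - 1) * (2 * i + 3) / (2 * i + 1) := by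
  rw [dP_even, show 2 * (i + 1) + 1 = (2 * i + 1) + 2 by ring, dP, if_neg (by omega), dW_add,
    dW_CC _ _ (by omega), dW_neg, dW_CC _ _ (by omega), if_pos (by omega), if_pos (by omega)]
  have e1 : (2 * (i + 1) + (2 * i + 1 + 2) + 1) / 2 = 2 * i + 3 := by omega
  have e2 : (2 * i + 1 + 2 * (i + 1) + 1) / 2 = 2 * i + 2 := by omega
  rw [e1, e2]
  push_cast
  have : (2 * (i : ℚ) + 1) ≠ 0 := by positivity
  field_simp
  ring

open Polynomial in
lemma dW_XX (i j : ℕ) : dW (X ^ i) (X ^ j) = ((j : ℚ) - i) * delannoy (i + j - 1) := by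
  unfold dW
  have : (X ^ i * derivative (X ^ j) - derivative (X ^ i) * X ^ j : ℚ[X]) =
      ((j : ℚ) - i) • X ^ (i + j - 1) := by
    rcases i with _ | i
    · rcases j with _ | j
      · simp
      · simp [smul_eq_C_mul]
    · rcases j with _ | j
      · simp [smul_eq_C_mul]; ring
      · rw [show i + 1 + (j + 1) - 1 = i + j + 1 by omega]
        simp [smul_eq_C_mul]; ring
  rw [this, map_smul, dL_X, smul_eq_mul]

open Polynomial in
lemma dW_expand (M : ℕ) (f g : ℚ[X]) (hf : f.natDegree < M) (hg : g.natDegree < M) :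
    dW f g = ∑ a : Fin M, ∑ b : Fin M, f.coeff a * g.coeff b * dW (X ^ (a : ℕ)) (X ^ (b : ℕ)) := by
  have ef : f = ∑ a : Fin M, f.coeff a • (X ^ (a : ℕ) : ℚ[X]) := by
    conv_lhs => rw [f.as_sum_range' M hf]
    rw [Finset.sum_range]; simp [smul_X_eq_monomial]
  have eg : g = ∑ a : Fin M, g.coeff a • (X ^ (a : ℕ) : ℚ[X]) := by
    conv_lhs => rw [g.as_sum_range' M hg]
    rw [Finset.sum_range]; simp [smul_X_eq_monomial]
  conv_lhs => rw [ef, eg]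
  unfold dW
  rw [derivative_sum, derivative_sum, Finset.sum_mul_sum, Finset.sum_mul_sum, ← Finset.sum_sub_distrib, map_sum]
  refine Finset.sum_congr rfl fun a _ => ?_
  rw [← Finset.sum_sub_distrib, map_sum]
  refine Finset.sum_congr rfl fun b _ => ?_
  rw [← smul_eq_mul (_ * _), ← map_smul]
  congr 1
  simp only [smul_eq_C_mul, derivative_C_mul, map_mul]; ring

/-- For every positive integer `n`, the Pfaffian of the `2n × 2n` skew-symmetric
matrix with entries `(j-i)·D_{i+j-3}` (1-based; here 0-based, so the entry at
`(i,j)` is `(j-i)·D_{i+j-1}`, the `(0,0)` entry being `0`) equals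
`2^{(n+1)(n-1)}·(2n-1)·∏_{k=1}^{n-1} (4k-1)`. -/
theorem pfaffian_delannoy (n : ℕ) (hn : 1 ≤ n) :
    pfaffian (N := n) (Matrix.of fun i j : Fin (2 * n) =>
        ((j.val : ℚ) - (i.val : ℚ)) * delannoy (i.val + j.val - 1)) =
      2 ^ ((n + 1) * (n - 1)) * (2 * (n : ℚ) - 1) *
        ∏ k ∈ Finset.Icc 1 (n - 1), (4 * (k : ℚ) - 1) := by
  set A : Matrix (Fin (2 * n)) (Fin (2 * n)) ℚ := Matrix.of fun i j : Fin (2 * n) =>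
        ((j.val : ℚ) - (i.val : ℚ)) * delannoy (i.val + j.val - 1) with hAdef
  let B : Matrix (Fin (2 * n)) (Fin (2 * n)) ℚ := Matrix.of fun i j => (dP i).coeff j
  have hskew : ∀ i j, A i j = - A j i := by
    intro i j
    simp only [hAdef, Matrix.of_apply]
    rw [add_comm j.val]; ring
  have hB : B.det = 1 := by
    rw [Matrix.det_of_isLowerTriangular]
    · apply Finset.prod_eq_one
      intro i _
      have := dP_monic i
      have h1 := this.1
      rw [Polynomial.Monic, Polynomial.leadingCoeff, this.2] at h1
      exact h1
    · intro i j hij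
      change (dP i).coeff j = 0
      apply Polynomial.coeff_eq_zero_of_natDegree_lt
      rw [(dP_monic i).2]
      exact hij
  have hBA : ∀ i j, (B * A * B.transpose) i j = dW (dP i) (dP j) := by
    intro i j
    rw [dW_expand (2 * n) _ _ (by rw [(dP_monic i).2]; exact i.2) (by rw [(dP_monic j).2]; exact j.2)]
    simp only [Matrix.mul_apply, Matrix.transpose_apply, Finset.sum_mul, dW_XX]
    rw [Finset.sum_comm]
    refine Finset.sum_congr rfl fun a _ => Finset.sum_congr rfl fun b _ => ?_
    simp only [B, hAdef, Matrix.of_apply]; ring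
  rw [← pfaffian_conj A B hskew hB, pfaffian_tri]
  · simp only [hBA, pE_val]
    have : ∀ i : Fin n, dW (dP ((0 : Fin 2).val + 2 * i.val)) (dP ((1 : Fin 2).val + 2 * i.val))
       = (fun k : ℕ => dW (dP (2 * k)) (dP (2 * k + 1))) i.val := by
      intro i; simp [add_comm]
    simp only [this]
    rw [Fin.prod_univ_eq_prod_range (fun k : ℕ => dW (dP (2 * k)) (dP (2 * k + 1))) n]
    obtain ⟨m, rfl⟩ : ∃ m, n = m + 1 := ⟨n - 1, by omega⟩
    clear_value A
    clear this hBA hB hskew hAdef B A hn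
    rw [Nat.add_sub_cancel]
    induction m with
    | zero => simp [dW_diag0]; norm_num
    | succ m ih =>
      rw [Finset.prod_range_succ, ih, Finset.prod_Icc_succ_top (by omega)]
      rw [dW_diag]
      have h0 : (2 * (m : ℚ) + 1) ≠ 0 := by positivity
      rw [show (m + 1 + 1 + 1) * (m + 1) = (m + 1 + 1) * m + (2 * m + 3) by ring, pow_add]
      push_cast
      field_simp
      ring
  · intro i j h
    rw [hBA, pE_val]
    simp only [Fin.val_zero, zero_add]
    exact dW_zero _ _ h
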